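/- Let σ > 0 and let X be a real-valued random variable satisfying P(|X| > ε) < 2·exp(−ε²/(2σ²)) for every ε > 0. Set a = √(2σ²·log 2) and assume E[|X| − a] ≤ 0. Then for every s > 0, E[ exp( s·(|X| − a) ) ] ≤ exp(4·s²·σ²). (Lemma 'subgaussian': MGF bound for the shifted absolute value of a subgaussian random variable.) -/

import Mathlib

open MeasureTheory

/-!
The constant `a` absorbs the prefactor of the two-sided tail: `2 exp (-(a + t)² / (2σ²))` is at most
`exp (-t² / (2σ²))`, so `Z = |X| - a` has an upper tail without prefactor, while `Z ≥ -a` and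
`E Z ≤ 0`. Compare `exp (s Z)` with `1 + s Z`, whose mean is at most `1`. Where `Z ≤ 0` the error is
at most `(s a)² / 2`. Where `Z ≥ 0` it is `exp (s Z) - 1 - s Z = ∫₀ᶻ s (exp (s t) - 1) dt`, so the
layer-cake formula and the tail bound give an expected error of at most `2 s² σ² exp (s² σ²)`.
With `q = s² σ²` and `a² = 2σ² log 2`, it remains to see that `1 + q + 2 q exp q ≤ exp (4 q)`.
-/

section RealInequalities

open Real

lemma exp_le_one_add_add_sq_div_two_of_nonpos {x : ℝ} (hx : x ≤ 0) :
    exp x ≤ 1 + x + x ^ 2 / 2 := by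
  have hquad : 1 + -x + (-x) ^ 2 / 2 ≤ exp (-x) := quadratic_le_exp_of_nonneg (by linarith)
  have hpos : 0 < 1 + x + x ^ 2 / 2 := by nlinarith [sq_nonneg (x + 1)]
  refine le_of_mul_le_mul_right ?_ (exp_pos (-x))
  calc exp x * exp (-x) = 1 := by rw [← exp_add, add_neg_cancel, exp_zero]
    _ ≤ 1 + x ^ 4 / 4 := le_add_of_nonneg_right (by positivity)
    _ = (1 + x + x ^ 2 / 2) * (1 + -x + (-x) ^ 2 / 2) := by ring
    _ ≤ (1 + x + x ^ 2 / 2) * exp (-x) := by gcongr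

lemma exp_le_one_add_add_sq_div_two_add_exp_max {c x : ℝ} (hx : -c ≤ x) :
    exp x ≤ 1 + x + c ^ 2 / 2 + (exp (max x 0) - 1 - max x 0) := by
  rcases le_total x 0 with hx0 | hx0
  · have hexp := exp_le_one_add_add_sq_div_two_of_nonpos hx0
    have hsq : x ^ 2 ≤ c ^ 2 := sq_le_sq' hx (by linarith)
    rw [max_eq_right hx0, exp_zero]
    linarith
  · rw [max_eq_left hx0]
    linarith [sq_nonneg c]

lemma exp_sub_one_le_mul_exp (x : ℝ) : exp x - 1 ≤ x * exp x := by
  have hmul : (1 - x) * exp x ≤ exp (-x) * exp x := by gcongr; exact one_sub_le_exp_neg x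
  rw [← exp_add, neg_add_cancel, exp_zero] at hmul
  linarith

lemma neg_sq_div_add_mul_le {σ : ℝ} (hσ : σ ≠ 0) (s t : ℝ) :
    -t ^ 2 / (2 * σ ^ 2) + s * t ≤ s ^ 2 * σ ^ 2 + -(4 * σ ^ 2)⁻¹ * t ^ 2 := by
  have hsq : s ^ 2 * σ ^ 2 + -(4 * σ ^ 2)⁻¹ * t ^ 2 - (-t ^ 2 / (2 * σ ^ 2) + s * t) =
      (s * σ - t / (2 * σ)) ^ 2 := by
    field_simp
    ring
  linarith [sq_nonneg (s * σ - t / (2 * σ))]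

lemma exp_neg_sq_div_mul_exp_sub_one_le {σ s t : ℝ} (hσ : σ ≠ 0) (hs : 0 ≤ s) (ht : 0 ≤ t) :
    exp (-t ^ 2 / (2 * σ ^ 2)) * (s * (exp (s * t) - 1)) ≤
      s ^ 2 * exp (s ^ 2 * σ ^ 2) * (t * exp (-(4 * σ ^ 2)⁻¹ * t ^ 2)) :=
  calc exp (-t ^ 2 / (2 * σ ^ 2)) * (s * (exp (s * t) - 1))
      ≤ exp (-t ^ 2 / (2 * σ ^ 2)) * (s * (s * t * exp (s * t))) := by
        gcongr
        exact exp_sub_one_le_mul_exp _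
    _ = s ^ 2 * t * exp (-t ^ 2 / (2 * σ ^ 2) + s * t) := by rw [exp_add]; ring
    _ ≤ s ^ 2 * t * exp (s ^ 2 * σ ^ 2 + -(4 * σ ^ 2)⁻¹ * t ^ 2) := by
        gcongr s ^ 2 * t * exp ?_
        exact neg_sq_div_add_mul_le hσ s t
    _ = s ^ 2 * exp (s ^ 2 * σ ^ 2) * (t * exp (-(4 * σ ^ 2)⁻¹ * t ^ 2)) := by rw [exp_add]; ring

lemma two_mul_exp_neg_add_sq_div_le {σ a t : ℝ} (hσ : σ ≠ 0) (ha : 0 ≤ a)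
    (ha_sq : a ^ 2 = 2 * σ ^ 2 * log 2) (ht : 0 ≤ t) :
    2 * exp (-(a + t) ^ 2 / (2 * σ ^ 2)) ≤ exp (-t ^ 2 / (2 * σ ^ 2)) := by
  have hlog : log 2 = a ^ 2 / (2 * σ ^ 2) := by rw [ha_sq]; field_simp
  calc 2 * exp (-(a + t) ^ 2 / (2 * σ ^ 2))
      = exp (log 2 + -(a + t) ^ 2 / (2 * σ ^ 2)) := by rw [exp_add, exp_log two_pos]
    _ = exp ((-t ^ 2 - 2 * a * t) / (2 * σ ^ 2)) := by rw [hlog, ← add_div]; ring_nf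
    _ ≤ exp (-t ^ 2 / (2 * σ ^ 2)) := by
        gcongr
        exact sub_le_self _ (by positivity)

lemma one_add_add_two_mul_mul_exp_le_exp {q : ℝ} (hq : 0 ≤ q) :
    1 + q + 2 * q * exp q ≤ exp (4 * q) :=
  calc 1 + q + 2 * q * exp q ≤ exp q + 2 * q * exp q := by linarith [add_one_le_exp q]
    _ ≤ exp q * (3 * q + 1) := by nlinarith [exp_pos q]
    _ ≤ exp q * exp (3 * q) := by gcongr; exact add_one_le_exp _
    _ = exp (4 * q) := by rw [← exp_add]; ring_nf

end RealInequalities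

section Integrals

open Real Set

lemma integral_mul_exp_mul_sub_one (s y : ℝ) :
    ∫ t in 0..y, s * (exp (s * t) - 1) = exp (s * y) - 1 - s * y := by
  have hderiv (t : ℝ) : HasDerivAt (fun t ↦ exp (s * t) - s * t) (s * (exp (s * t) - 1)) t := by
    have hlin : HasDerivAt (fun t ↦ s * t) s t := by simpa using (hasDerivAt_id t).const_mul s
    exact (hlin.exp.sub hlin).congr_deriv (by ring)
  rw [intervalIntegral.integral_eq_sub_of_hasDerivAt (fun t _ ↦ hderiv t)
    (Continuous.intervalIntegrable (by fun_prop) _ _)]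
  simp only [mul_zero, exp_zero]
  ring

lemma lintegral_Ioi_mul_exp_neg_mul_sq {b : ℝ} (hb : 0 < b) :
    ∫⁻ t in Ioi (0 : ℝ), ENNReal.ofReal (t * exp (-b * t ^ 2)) = ENNReal.ofReal (2 * b)⁻¹ := by
  have hint : ∫ t in Ioi (0 : ℝ), t * exp (-b * t ^ 2) = (2 * b)⁻¹ := by
    exact_mod_cast integral_mul_cexp_neg_mul_sq (b := b) (by simpa using hb)
  rw [← hint, ofReal_integral_eq_lintegral_ofReal
    (integrable_mul_exp_neg_mul_sq hb).integrableOn]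
  filter_upwards [ae_restrict_mem measurableSet_Ioi] with t ht
  exact mul_nonneg (le_of_lt ht) (exp_pos _).le

variable {Ω : Type*} [MeasurableSpace Ω] {μ : Measure Ω}

lemma lintegral_exp_mul_sub_one_sub {Y : Ω → ℝ} (hY : AEMeasurable Y μ) (hY0 : 0 ≤ᵐ[μ] Y)
    (s : ℝ) :
    ∫⁻ ω, ENNReal.ofReal (exp (s * Y ω) - 1 - s * Y ω) ∂μ =
      ∫⁻ t in Ioi 0, μ {ω | t < Y ω} * ENNReal.ofReal (s * (exp (s * t) - 1)) := by
  simp_rw [← integral_mul_exp_mul_sub_one]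
  refine lintegral_comp_eq_lintegral_meas_lt_mul μ hY0 hY
    (fun t _ ↦ Continuous.intervalIntegrable (by fun_prop) _ _) ?_
  filter_upwards [ae_restrict_mem measurableSet_Ioi] with t (ht : 0 < t)
  rcases le_total 0 s with hs | hs
  · exact mul_nonneg hs (sub_nonneg.2 (one_le_exp (by positivity)))
  · exact mul_nonneg_of_nonpos_of_nonpos hs
      (sub_nonpos.2 (exp_le_one_iff.2 (mul_nonpos_of_nonpos_of_nonneg hs ht.le)))

lemma lintegral_exp_mul_le_of_integral_nonpos [IsProbabilityMeasure μ] {Z : Ω → ℝ} {c s : ℝ}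
    (hs : 0 ≤ s) (hZ : Integrable Z μ) (hc : ∀ᵐ ω ∂μ, -c ≤ Z ω) (hmean : ∫ ω, Z ω ∂μ ≤ 0)
    (hexp : Integrable (fun ω ↦ exp (s * max (Z ω) 0) - 1 - s * max (Z ω) 0) μ) :
    ∫⁻ ω, ENNReal.ofReal (exp (s * Z ω)) ∂μ ≤ ENNReal.ofReal
      (1 + (s * c) ^ 2 / 2 + ∫ ω, (exp (s * max (Z ω) 0) - 1 - s * max (Z ω) 0) ∂μ) := by
  set R : Ω → ℝ := fun ω ↦ exp (s * max (Z ω) 0) - 1 - s * max (Z ω) 0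
  have hbound : ∀ᵐ ω ∂μ, exp (s * Z ω) ≤ 1 + (s * c) ^ 2 / 2 + s * Z ω + R ω := by
    filter_upwards [hc] with ω hω
    have hsc : -(s * c) ≤ s * Z ω := by linarith [mul_le_mul_of_nonneg_left hω hs]
    have h := exp_le_one_add_add_sq_div_two_add_exp_max hsc
    rw [← mul_zero s, ← mul_max_of_nonneg _ _ hs] at h
    linarith
  have hlin : Integrable (fun ω ↦ 1 + (s * c) ^ 2 / 2 + s * Z ω) μ :=
    (integrable_const _).add (hZ.const_mul s)
  calc ∫⁻ ω, ENNReal.ofReal (exp (s * Z ω)) ∂μ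
      ≤ ∫⁻ ω, ENNReal.ofReal (1 + (s * c) ^ 2 / 2 + s * Z ω + R ω) ∂μ :=
        lintegral_mono_ae (hbound.mono fun _ h ↦ ENNReal.ofReal_le_ofReal h)
    _ = ENNReal.ofReal (∫ ω, (1 + (s * c) ^ 2 / 2 + s * Z ω + R ω) ∂μ) :=
        (ofReal_integral_eq_lintegral_ofReal (hlin.add hexp)
          (hbound.mono fun _ h ↦ (exp_pos _).le.trans h)).symm
    _ = ENNReal.ofReal (1 + (s * c) ^ 2 / 2 + s * ∫ ω, Z ω ∂μ + ∫ ω, R ω ∂μ) := by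
        rw [integral_add hlin hexp, integral_add (integrable_const _) (hZ.const_mul s),
          integral_const_mul, integral_const, probReal_univ, one_smul]
    _ ≤ ENNReal.ofReal (1 + (s * c) ^ 2 / 2 + ∫ ω, R ω ∂μ) := by
        gcongr ENNReal.ofReal (?_ + _)
        exact add_le_of_nonpos_right (mul_nonpos_of_nonneg_of_nonpos hs hmean)

end Integrals

section GaussianUpperTail

open Real Set

variable {Ω : Type*} [MeasurableSpace Ω] {μ : Measure Ω} {Z : Ω → ℝ} {σ s c : ℝ}

/-- `Z` has an upper tail dominated by the Chernoff bound `exp (-t² / (2σ²))` of a centred Gaussian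
of variance `σ²`. Only `t > 0` is constrained, so shifting the usual two-sided sub-Gaussian tail
far enough to absorb its prefactor `2` yields an instance. -/
def HasGaussianUpperTail (Z : Ω → ℝ) (σ : ℝ) (μ : Measure Ω) : Prop :=
  ∀ t : ℝ, 0 < t → μ {ω | t < Z ω} ≤ ENNReal.ofReal (exp (-t ^ 2 / (2 * σ ^ 2)))

lemma hasGaussianUpperTail_abs_sub [IsFiniteMeasure μ] {X : Ω → ℝ} {a : ℝ} (hσ : σ ≠ 0)
    (ha : 0 ≤ a) (ha_sq : a ^ 2 = 2 * σ ^ 2 * log 2)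
    (htail : ∀ ε : ℝ, 0 < ε → μ.real {ω | ε < |X ω|} ≤ 2 * exp (-ε ^ 2 / (2 * σ ^ 2))) :
    HasGaussianUpperTail (fun ω ↦ |X ω| - a) σ μ := by
  intro t ht
  simp_rw [lt_sub_iff_add_lt']
  rw [ENNReal.le_ofReal_iff_toReal_le (measure_ne_top _ _) (exp_pos _).le]
  exact (htail (a + t) (by positivity)).trans
    (two_mul_exp_neg_add_sq_div_le hσ ha ha_sq ht.le)

namespace HasGaussianUpperTail

lemma max_zero (h : HasGaussianUpperTail Z σ μ) :
    HasGaussianUpperTail (fun ω ↦ max (Z ω) 0) σ μ := by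
  intro t ht
  simpa only [lt_max_iff, ht.not_gt, or_false] using h t ht

lemma lintegral_exp_mul_sub_one_sub_le (h : HasGaussianUpperTail Z σ μ) (hZ : AEMeasurable Z μ)
    (hZ0 : 0 ≤ᵐ[μ] Z) (hσ : σ ≠ 0) (hs : 0 ≤ s) :
    ∫⁻ ω, ENNReal.ofReal (exp (s * Z ω) - 1 - s * Z ω) ∂μ ≤
      ENNReal.ofReal (2 * (s ^ 2 * σ ^ 2) * exp (s ^ 2 * σ ^ 2)) := by
  have hC : 0 ≤ s ^ 2 * exp (s ^ 2 * σ ^ 2) := by positivity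
  rw [lintegral_exp_mul_sub_one_sub hZ hZ0]
  calc ∫⁻ t in Ioi 0, μ {ω | t < Z ω} * ENNReal.ofReal (s * (exp (s * t) - 1))
      ≤ ∫⁻ t in Ioi 0, ENNReal.ofReal (s ^ 2 * exp (s ^ 2 * σ ^ 2)) *
          ENNReal.ofReal (t * exp (-(4 * σ ^ 2)⁻¹ * t ^ 2)) := by
        refine setLIntegral_mono' measurableSet_Ioi fun t (ht : 0 < t) ↦ ?_
        grw [h t ht]
        rw [← ENNReal.ofReal_mul (exp_pos _).le, ← ENNReal.ofReal_mul hC]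
        exact ENNReal.ofReal_le_ofReal (exp_neg_sq_div_mul_exp_sub_one_le hσ hs ht.le)
    _ = ENNReal.ofReal (s ^ 2 * exp (s ^ 2 * σ ^ 2) * (2 * (4 * σ ^ 2)⁻¹)⁻¹) := by
        rw [lintegral_const_mul' _ _ ENNReal.ofReal_ne_top,
          lintegral_Ioi_mul_exp_neg_mul_sq (by positivity), ENNReal.ofReal_mul hC]
    _ = ENNReal.ofReal (2 * (s ^ 2 * σ ^ 2) * exp (s ^ 2 * σ ^ 2)) := by
        congr 1
        field_simp
        ring

lemma integrable_exp_mul_sub_one_sub (h : HasGaussianUpperTail Z σ μ) (hZ : AEMeasurable Z μ)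
    (hZ0 : 0 ≤ᵐ[μ] Z) (hσ : σ ≠ 0) (hs : 0 ≤ s) :
    Integrable (fun ω ↦ exp (s * Z ω) - 1 - s * Z ω) μ := by
  have hmeas : AEMeasurable (fun ω ↦ exp (s * Z ω) - 1 - s * Z ω) μ := by fun_prop
  have hnonneg (ω : Ω) : 0 ≤ exp (s * Z ω) - 1 - s * Z ω := by linarith [add_one_le_exp (s * Z ω)]
  rw [← lintegral_ofReal_ne_top_iff_integrable hmeas.aestronglyMeasurable (.of_forall hnonneg)]
  exact ne_top_of_le_ne_top ENNReal.ofReal_ne_top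
    (h.lintegral_exp_mul_sub_one_sub_le hZ hZ0 hσ hs)

lemma integral_exp_mul_sub_one_sub_le (h : HasGaussianUpperTail Z σ μ) (hZ : AEMeasurable Z μ)
    (hZ0 : 0 ≤ᵐ[μ] Z) (hσ : σ ≠ 0) (hs : 0 ≤ s) :
    ∫ ω, (exp (s * Z ω) - 1 - s * Z ω) ∂μ ≤ 2 * (s ^ 2 * σ ^ 2) * exp (s ^ 2 * σ ^ 2) := by
  have hnonneg (ω : Ω) : 0 ≤ exp (s * Z ω) - 1 - s * Z ω := by linarith [add_one_le_exp (s * Z ω)]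
  rw [← ENNReal.ofReal_le_ofReal_iff (by positivity), ofReal_integral_eq_lintegral_ofReal
    (h.integrable_exp_mul_sub_one_sub hZ hZ0 hσ hs) (.of_forall hnonneg)]
  exact h.lintegral_exp_mul_sub_one_sub_le hZ hZ0 hσ hs

lemma integrable [IsFiniteMeasure μ] (h : HasGaussianUpperTail Z σ μ) (hZ : AEMeasurable Z μ)
    (hσ : σ ≠ 0) (hc : ∀ᵐ ω ∂μ, -c ≤ Z ω) : Integrable Z μ := by
  have hexp := h.max_zero.integrable_exp_mul_sub_one_sub (hZ.max aemeasurable_const)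
    (.of_forall fun _ ↦ le_max_right _ _) hσ zero_le_one
  refine ((integrable_const (1 + |c|)).add hexp).mono' hZ.aestronglyMeasurable ?_
  filter_upwards [hc] with ω hω
  have hmax : max (Z ω) 0 ≤ 1 + (exp (max (Z ω) 0) - 1 - max (Z ω) 0) := by
    linarith [two_mul_le_exp (x := max (Z ω) 0)]
  simp only [norm_eq_abs, Pi.add_apply, one_mul, abs_le]
  constructor <;> linarith [le_max_left (Z ω) 0, le_max_right (Z ω) 0, le_abs_self c, abs_nonneg c]

lemma lintegral_exp_mul_le [IsProbabilityMeasure μ] (h : HasGaussianUpperTail Z σ μ)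
    (hZ : AEMeasurable Z μ) (hσ : σ ≠ 0) (hs : 0 ≤ s) (hc : ∀ᵐ ω ∂μ, -c ≤ Z ω)
    (hmean : ∫ ω, Z ω ∂μ ≤ 0) :
    ∫⁻ ω, ENNReal.ofReal (exp (s * Z ω)) ∂μ ≤
      ENNReal.ofReal (1 + (s * c) ^ 2 / 2 + 2 * (s ^ 2 * σ ^ 2) * exp (s ^ 2 * σ ^ 2)) := by
  have hmax : AEMeasurable (fun ω ↦ max (Z ω) 0) μ := hZ.max aemeasurable_const
  have hmax0 : 0 ≤ᵐ[μ] fun ω ↦ max (Z ω) 0 := .of_forall fun _ ↦ le_max_right _ _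
  refine (lintegral_exp_mul_le_of_integral_nonpos hs (h.integrable hZ hσ hc) hc hmean
    (h.max_zero.integrable_exp_mul_sub_one_sub hmax hmax0 hσ hs)).trans ?_
  gcongr
  exact h.max_zero.integral_exp_mul_sub_one_sub_le hmax hmax0 hσ hs

end HasGaussianUpperTail

end GaussianUpperTail

/-- Lemma "subgaussian": MGF bound for the shifted absolute value of a subgaussian
random variable. If `P(|X| > ε) < 2·exp(−ε²/(2σ²))` for all `ε > 0`,
`a = √(2σ²·log 2)`, and `E[|X|] ≤ a` (i.e. `E[|X| − a] ≤ 0`), then for every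
`s > 0`, `E[exp(s·(|X| − a))] ≤ exp(4s²σ²)`. -/
theorem subgaussian_shifted_mgf_bound {Ω : Type*} [MeasurableSpace Ω]
    (μ : Measure Ω) [IsProbabilityMeasure μ]
    (X : Ω → ℝ) (hX : Measurable X)
    (σ : ℝ) (hσ : 0 < σ)
    (a : ℝ) (ha : a = Real.sqrt (2 * σ ^ 2 * Real.log 2))
    (htail : ∀ ε : ℝ, 0 < ε →
      (μ {ω | |X ω| > ε}).toReal < 2 * Real.exp (-ε ^ 2 / (2 * σ ^ 2)))
    (hmean : ∫ ω, |X ω| ∂μ ≤ a)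
    (s : ℝ) (hs : 0 < s) :
    ∫⁻ ω, ENNReal.ofReal (Real.exp (s * (|X ω| - a))) ∂μ ≤
      ENNReal.ofReal (Real.exp (4 * s ^ 2 * σ ^ 2)) := by
  have ha0 : 0 ≤ a := ha ▸ Real.sqrt_nonneg _
  have ha_sq : a ^ 2 = 2 * σ ^ 2 * Real.log 2 := by rw [ha, Real.sq_sqrt (by positivity)]
  have hZ : AEMeasurable (fun ω ↦ |X ω| - a) μ := by fun_prop
  have hZ_ge : ∀ᵐ ω ∂μ, -a ≤ |X ω| - a :=
    .of_forall fun ω ↦ by linarith [abs_nonneg (X ω)]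
  have hZ_tail : HasGaussianUpperTail (fun ω ↦ |X ω| - a) σ μ :=
    hasGaussianUpperTail_abs_sub hσ.ne' ha0 ha_sq fun ε hε ↦ (htail ε hε).le
  have hX_int : Integrable (fun ω ↦ |X ω|) μ := by
    simpa [sub_eq_add_neg] using hZ_tail.integrable hZ hσ.ne' hZ_ge
  have hZ_mean : ∫ ω, (|X ω| - a) ∂μ ≤ 0 := by
    simpa [integral_sub hX_int (integrable_const a)] using hmean
  have hsa : (s * a) ^ 2 / 2 ≤ s ^ 2 * σ ^ 2 := by
    have hlog_le : Real.log 2 ≤ 1 := by linarith [Real.log_two_lt_d9]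
    calc (s * a) ^ 2 / 2 = s ^ 2 * σ ^ 2 * Real.log 2 := by rw [mul_pow, ha_sq]; ring
      _ ≤ s ^ 2 * σ ^ 2 := mul_le_of_le_one_right (by positivity) hlog_le
  refine (hZ_tail.lintegral_exp_mul_le hZ hσ.ne' hs.le hZ_ge hZ_mean).trans ?_
  rw [mul_assoc 4]
  grw [hsa, one_add_add_two_mul_mul_exp_le_exp (by positivity)]
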